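/- Let μ be a probability mass function on T₁ with 0 < β := Σ_τ μ(τ)·deg(τ) < ∞, let η₁ be the law on T₁ with degree distribution Q and i.i.d. marks, where Q has finite nonzero mean, assume μ is absolutely continuous with respect to η₁, and assume μ̄^{1,o} is symmetric (μ̄^{1,o}((a,y),(b,y′)) = μ̄^{1,o}((b,y′),(a,y)) for all a,b ∈ 𝒳, y,y′ ∈ 𝒴). Then the sums Σ_τ μ(τ)·log(μ̌(τ)/η₁(τ)) and Σ_τ μ(τ)·log(μ̂(τ)/η₁(τ)) converge absolutely, and β·H(μ̄^{1,o} ‖ η̄₁^{1,o}) = Σ_τ μ(τ)·log(μ̌(τ)/η₁(τ)) + Σ_τ μ(τ)·log(μ̂(τ)/η₁(τ)). -/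

import Mathlib

open scoped BigOperators ENNReal Classical

noncomputable section

/-- Depth-1 rooted marked trees: the root mark together with the multiset of
(vertex mark, edge mark toward the root, edge mark at the root) triples of the
neighbors of the root. -/
abbrev T1 (𝒳 𝒴 : Type) : Type := 𝒳 × Multiset (𝒳 × 𝒴 × 𝒴)

section Defs

variable {𝒳 𝒴 : Type} [Fintype 𝒳] [Fintype 𝒴] [DecidableEq 𝒳] [DecidableEq 𝒴]

/-- Degree of the root of a depth-1 tree. -/
def deg (τ : T1 𝒳 𝒴) : ℕ := Multiset.card τ.2

/-- Symmetrized edge-mark distribution `ξ̄(y, y') = (ξ(y, y') + ξ(y', y)) / 2`. -/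
def xiBar (ξ : 𝒴 × 𝒴 → ℝ) (y y' : 𝒴) : ℝ := (ξ (y, y') + ξ (y', y)) / 2

/-- Multinomial coefficient `card m ! / ∏ₛ (multiplicity of s in m)!`. -/
def ordCoeff (m : Multiset (𝒳 × 𝒴 × 𝒴)) : ℝ :=
  (Nat.factorial (Multiset.card m) : ℝ) /
    ∏ s ∈ m.toFinset, (Nat.factorial (m.count s) : ℝ)

/-- The law `η₁` on `T1` with root-degree distribution `Q` and i.i.d. marks:
`η₁ (x, m) = ν x · Q (card m) · (card m)!/∏ₛ count s !· ∏_{(a,y,y') ∈ m} ν a · ξ̄ y y'`. -/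
def eta1 (ν : 𝒳 → ℝ) (ξ : 𝒴 × 𝒴 → ℝ) (Q : ℕ → ℝ) (τ : T1 𝒳 𝒴) : ℝ :=
  ν τ.1 * Q (Multiset.card τ.2) * ordCoeff τ.2 *
    (τ.2.map fun p => ν p.1 * xiBar ξ p.2.1 p.2.2).prod

/-- Mean root degree `β = ∑_τ μ τ · deg τ`. -/
def meanDeg (μ : T1 𝒳 𝒴 → ℝ) : ℝ := ∑' τ : T1 𝒳 𝒴, μ τ * (deg τ : ℝ)

/-- The neighbor–root marginal `μ̄^{1,o}`:
`μ̄^{1,o} ((a,y), (b,y')) = (1/β) ∑_{m} μ (b, m) · (multiplicity of (a,y,y') in m)`. -/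
def nbrRoot (μ : T1 𝒳 𝒴 → ℝ) (p : (𝒳 × 𝒴) × (𝒳 × 𝒴)) : ℝ :=
  (1 / meanDeg μ) *
    ∑' m : Multiset (𝒳 × 𝒴 × 𝒴), μ (p.2.1, m) * (m.count (p.1.1, p.1.2, p.2.2) : ℝ)

/-- First marginal `μ̄¹` of `μ̄^{1,o}`. -/
def marg1 (μ : T1 𝒳 𝒴 → ℝ) (u : 𝒳 × 𝒴) : ℝ := ∑ v : 𝒳 × 𝒴, nbrRoot μ (u, v)

/-- Second marginal `μ̄ᵒ` of `μ̄^{1,o}`. -/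
def margO (μ : T1 𝒳 𝒴 → ℝ) (v : 𝒳 × 𝒴) : ℝ := ∑ u : 𝒳 × 𝒴, nbrRoot μ (u, v)

/-- Conditional law `μ̄^{1|o} (u | v) = μ̄^{1,o}(u,v) / μ̄ᵒ(v)` (and `0` if `μ̄ᵒ(v) = 0`). -/
def condNbr (μ : T1 𝒳 𝒴 → ℝ) (u v : 𝒳 × 𝒴) : ℝ :=
  if 0 < margO μ v then nbrRoot μ (u, v) / margO μ v else 0

/-- `μ̌ (x, m) = η₁ (x, m) · ∏_{(a,y,y') ∈ m} μ̄¹(a,y) / η̄₁¹(a,y)` (product with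
multiplicity; in Lean a ratio with zero denominator is `0`). -/
def muCheck (ν : 𝒳 → ℝ) (ξ : 𝒴 × 𝒴 → ℝ) (Q : ℕ → ℝ) (μ : T1 𝒳 𝒴 → ℝ) (τ : T1 𝒳 𝒴) : ℝ :=
  eta1 ν ξ Q τ *
    (τ.2.map fun p => marg1 μ (p.1, p.2.1) / marg1 (eta1 ν ξ Q) (p.1, p.2.1)).prod

/-- `μ̂ (x, m) = η₁ (x, m) · ∏_{(a,y,y') ∈ m} μ̄^{1|o}((a,y)|(x,y')) / η̄₁^{1|o}((a,y)|(x,y'))`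
(product with multiplicity; a ratio with zero denominator is `0`). -/
def muHat (ν : 𝒳 → ℝ) (ξ : 𝒴 × 𝒴 → ℝ) (Q : ℕ → ℝ) (μ : T1 𝒳 𝒴 → ℝ) (τ : T1 𝒳 𝒴) : ℝ :=
  eta1 ν ξ Q τ *
    (τ.2.map fun p =>
      condNbr μ (p.1, p.2.1) (τ.1, p.2.2) /
        condNbr (eta1 ν ξ Q) (p.1, p.2.1) (τ.1, p.2.2)).prod

end Defs

/-- Relative entropy `H(p ‖ q) = ∑ₛ p s * log (p s / q s)` of probability mass
functions, with value `∞` when `p` is not absolutely continuous with respect to `q`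
(or the defining series diverges); `0·log 0 = 0` is automatic since `Real.log 0 = 0`. -/
def relEnt {S : Type*} (p q : S → ℝ) : ℝ≥0∞ :=
  if (∀ s, q s = 0 → p s = 0) ∧ Summable (fun s => p s * Real.log (p s / q s)) then
    ENNReal.ofReal (∑' s, p s * Real.log (p s / q s))
  else ⊤

/-!
Summing a function `F` of oriented edges over the neighbors of the root and averaging over `μ`
gives `β` times the `μ̄^{1,o}`-average of `F`. Tilting `η` by a product of edge weights therefore
turns the average log-density into an average over a single edge. For the weights defining `μ̌`
this is `β * H(μ̄¹ ‖ η̄¹)`; for those defining `μ̂` the chain rule for relative entropy gives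
`β * (H(μ̄^{1,o} ‖ η̄^{1,o}) - H(μ̄ᵒ ‖ η̄ᵒ))`. The two marginal terms cancel when `μ̄¹ = μ̄ᵒ` and
`η̄¹ = η̄ᵒ`. For `η₁`, symmetry of the marginal follows from the symmetry of `ξ̄`: marking one
neighbor in a multinomial sample factors out that neighbor's weight.
-/

section RelativeEntropy

/-- Relative entropy of nonnegative functions on a finite type, as a real number. It is the usual
relative entropy only under absolute continuity: since `x / 0 = 0`, terms with `q s = 0` vanish. -/
def finRelEnt {S : Type*} [Fintype S] (p q : S → ℝ) : ℝ :=
  ∑ s, p s * Real.log (p s / q s)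

variable {α β : Type*}

lemma fst_marginal_pos [Fintype β] {p : α × β → ℝ} (hp : ∀ s, 0 ≤ p s)
    {s : α × β} (hs : 0 < p s) : 0 < ∑ b, p (s.1, b) :=
  Finset.sum_pos' (fun _ _ => hp _) ⟨s.2, Finset.mem_univ _, hs⟩

lemma snd_marginal_pos [Fintype α] {p : α × β → ℝ} (hp : ∀ s, 0 ≤ p s)
    {s : α × β} (hs : 0 < p s) : 0 < ∑ a, p (a, s.2) :=
  Finset.sum_pos' (fun _ _ => hp _) ⟨s.1, Finset.mem_univ _, hs⟩

variable [Fintype α] [Fintype β]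

lemma sum_mul_fst (p : α × β → ℝ) (f : α → ℝ) :
    ∑ s, p s * f s.1 = ∑ a, (∑ b, p (a, b)) * f a := by
  simp only [Fintype.sum_prod_type, Finset.sum_mul]

lemma sum_mul_snd (p : α × β → ℝ) (f : β → ℝ) :
    ∑ s, p s * f s.2 = ∑ b, (∑ a, p (a, b)) * f b := by
  simp only [Fintype.sum_prod_type_right, Finset.sum_mul]

lemma sum_mul_log_conditional_div {p q : α × β → ℝ} (hp : ∀ s, 0 ≤ p s) (hq : ∀ s, 0 ≤ q s)
    (hpq : ∀ s, q s = 0 → p s = 0) :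
    ∑ s, p s * Real.log ((p s / ∑ a, p (a, s.2)) / (q s / ∑ a, q (a, s.2))) =
      finRelEnt p q - finRelEnt (fun b => ∑ a, p (a, b)) (fun b => ∑ a, q (a, b)) := by
  unfold finRelEnt
  rw [← sum_mul_snd p fun b => Real.log ((∑ a, p (a, b)) / ∑ a, q (a, b)),
    ← Finset.sum_sub_distrib]
  refine Finset.sum_congr rfl fun s _ => ?_
  rcases (hp s).eq_or_lt with hps | hps
  · simp only [← hps, zero_mul, sub_zero]
  · have hqs : 0 < q s := (hq s).lt_of_ne' fun h => hps.ne' (hpq s h)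
    have hp' := snd_marginal_pos hp hps
    have hq' := snd_marginal_pos hq hqs
    rw [div_div_div_comm, Real.log_div (div_pos hps hqs).ne' (div_pos hp' hq').ne', mul_sub]

end RelativeEntropy

section Multinomial

variable {σ : Type*} [DecidableEq σ]

lemma countPerms_cons_mul_count (s : σ) (m : Multiset σ) :
    (s ::ₘ m).countPerms * (s ::ₘ m).count s = (m.card + 1) * m.countPerms := by
  have hfilter : (s ::ₘ m).filter (s ≠ ·) = m.filter (s ≠ ·) :=
    Multiset.filter_cons_of_neg _ (not_not_intro rfl)
  rw [Multiset.countPerms_filter_ne s (s ::ₘ m), Multiset.countPerms_filter_ne s m,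
    hfilter, Multiset.card_cons,
    Multiset.count_cons_self, mul_right_comm, ← Nat.add_one_mul_choose_eq, mul_assoc]

/-- Total weight of the orderings of the multiset `m`, for a product weight `w`; if `w` is a
probability mass function, this is the law of an unordered i.i.d. sample of size `m.card`. -/
def multisetWeight (w : σ → ℝ) (m : Multiset σ) : ℝ :=
  m.countPerms * (m.map w).prod

lemma multisetWeight_nonneg {w : σ → ℝ} (hw : ∀ s, 0 ≤ w s) (m : Multiset σ) :
    0 ≤ multisetWeight w m :=
  mul_nonneg (Nat.cast_nonneg _) (Multiset.prod_map_nonneg fun s _ => hw s)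

lemma multisetWeight_cons_mul_count (w : σ → ℝ) (s : σ) (m : Multiset σ) :
    multisetWeight w (s ::ₘ m) * (s ::ₘ m).count s =
      w s * ((m.card + 1) * multisetWeight w m) := by
  have hcount : ((s ::ₘ m).countPerms * (s ::ₘ m).count s : ℝ) =
      (m.card + 1) * m.countPerms := by
    exact_mod_cast countPerms_cons_mul_count s m
  rw [multisetWeight, multisetWeight, Multiset.map_cons, Multiset.prod_cons]
  linear_combination w s * (m.map w).prod * hcount

lemma tsum_multisetWeight_mul_count (w : σ → ℝ) (R : ℕ → ℝ) (s : σ) :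
    ∑' m : Multiset σ, R m.card * multisetWeight w m * m.count s =
      w s * ∑' m : Multiset σ, R (m.card + 1) * ((m.card + 1) * multisetWeight w m) := by
  have hinj : Function.Injective fun m : Multiset σ => s ::ₘ m :=
    fun _ _ => (Multiset.cons_inj_right s).1
  rw [← hinj.tsum_eq, ← tsum_mul_left]
  · refine tsum_congr fun m => ?_
    rw [mul_assoc, multisetWeight_cons_mul_count, Multiset.card_cons, mul_left_comm]
  · intro m hm
    have hs : s ∈ m := by
      by_contra hs
      simp [Multiset.count_eq_zero_of_notMem hs] at hm
    exact ⟨m.erase s, Multiset.cons_erase hs⟩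

lemma sum_sym_multisetWeight [Fintype σ] (w : σ → ℝ) (n : ℕ) :
    ∑ c : Sym σ n, multisetWeight w c = (∑ s, w s) ^ n := by
  rw [Finset.sum_pow, Finset.sym_univ]
  rfl

lemma summable_mul_multisetWeight [Fintype σ] {w : σ → ℝ} (hw : ∀ s, 0 ≤ w s) {R : ℕ → ℝ}
    (hR : ∀ n, 0 ≤ R n) (hsum : Summable fun n => R n * (∑ s, w s) ^ n) :
    Summable fun m : Multiset σ => R m.card * multisetWeight w m := by
  let byCard : (Σ n, Sym σ n) ≃ Multiset σ := Equiv.sigmaFiberEquiv Multiset.card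
  have hfiber (n : ℕ) :
      ∑ c : Sym σ n, R (byCard ⟨n, c⟩).card * multisetWeight w (byCard ⟨n, c⟩) =
        R n * (∑ s, w s) ^ n := by
    rw [← sum_sym_multisetWeight, Finset.mul_sum]
    exact Finset.sum_congr rfl fun c _ => congrArg (fun k => R k * multisetWeight w c) c.2
  refine byCard.summable_iff.1 ((summable_sigma_of_nonneg fun _ =>
    mul_nonneg (hR _) (multisetWeight_nonneg hw _)).2
      ⟨fun n => Summable.of_finite, hsum.congr fun n => ?_⟩)
  rw [tsum_fintype]
  exact (hfiber n).symm

end Multinomial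

lemma hasSum_prod_of_fintype {α β M : Type*} [Fintype α] [AddCommMonoid M] [TopologicalSpace M]
    [ContinuousAdd M] {f : α × β → M} {g : α → M}
    (h : ∀ a, HasSum (fun b => f (a, b)) (g a)) : HasSum f (∑ a, g a) := by
  have hslice (a : α) : HasSum (fun t : α × β => if t.1 = a then f t else 0) (g a) := by
    refine ((Prod.mk_right_injective a).hasSum_iff ?_).1 ?_
    · rintro ⟨a', b⟩ hab
      exact if_neg fun haa' => hab ⟨b, Prod.ext haa'.symm rfl⟩
    · simpa only [Function.comp_def, if_true] using h a
  simpa only [Finset.sum_ite_eq, Finset.mem_univ, if_true] using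
    hasSum_sum fun a (_ : a ∈ Finset.univ) => hslice a

section NeighborRoot

variable {𝒳 𝒴 : Type}

/-- The oriented edge from a neighbor to the root `x`: the triple `(a, y, y')` describing the
neighbor is regrouped as `((a, y), (x, y'))`, each endpoint taking the edge mark associated
with it. -/
def edgeEquiv : 𝒳 × (𝒳 × 𝒴 × 𝒴) ≃ (𝒳 × 𝒴) × (𝒳 × 𝒴) where
  toFun t := ((t.2.1, t.2.2.1), (t.1, t.2.2.2))
  invFun p := (p.2.1, (p.1.1, p.1.2, p.2.2))

variable [DecidableEq 𝒳] [DecidableEq 𝒴] {μ η : T1 𝒳 𝒴 → ℝ}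

lemma nbrRoot_edgeEquiv (μ : T1 𝒳 𝒴 → ℝ) (x : 𝒳) (s : 𝒳 × 𝒴 × 𝒴) :
    nbrRoot μ (edgeEquiv (x, s)) =
      1 / meanDeg μ * ∑' m : Multiset (𝒳 × 𝒴 × 𝒴), μ (x, m) * m.count s :=
  rfl

lemma nbrRoot_nonneg (hμ : ∀ τ, 0 ≤ μ τ) (p : (𝒳 × 𝒴) × (𝒳 × 𝒴)) : 0 ≤ nbrRoot μ p :=
  mul_nonneg (one_div_nonneg.2 (tsum_nonneg fun τ => mul_nonneg (hμ τ) (Nat.cast_nonneg _)))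
    (tsum_nonneg fun _ => mul_nonneg (hμ _) (Nat.cast_nonneg _))

lemma summable_mul_count (hμ : ∀ τ, 0 ≤ μ τ) (hdeg : Summable fun τ => μ τ * (deg τ : ℝ))
    (x : 𝒳) (s : 𝒳 × 𝒴 × 𝒴) :
    Summable fun m : Multiset (𝒳 × 𝒴 × 𝒴) => μ (x, m) * (m.count s : ℝ) :=
  (hdeg.comp_injective (Prod.mk_right_injective x)).of_nonneg_of_le
    (fun _ => mul_nonneg (hμ _) (Nat.cast_nonneg _))
    (fun m => mul_le_mul_of_nonneg_left (Nat.cast_le.2 (m.count_le_card s)) (hμ _))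

lemma nbrRoot_pos_of_mem (hμ : ∀ τ, 0 ≤ μ τ) (hdeg : Summable fun τ => μ τ * (deg τ : ℝ))
    {τ : T1 𝒳 𝒴} (hτ : μ τ ≠ 0) {s : 𝒳 × 𝒴 × 𝒴} (hs : s ∈ τ.2) :
    0 < nbrRoot μ (edgeEquiv (τ.1, s)) := by
  have hτ_pos : 0 < μ τ := (hμ τ).lt_of_ne' hτ
  have hmean : 0 < meanDeg μ :=
    hdeg.tsum_pos (fun _ => mul_nonneg (hμ _) (Nat.cast_nonneg _)) τ
      (mul_pos hτ_pos (Nat.cast_pos.2 (Multiset.card_pos_iff_exists_mem.2 ⟨s, hs⟩)))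
  refine mul_pos (one_div_pos.2 hmean) ((summable_mul_count hμ hdeg τ.1 s).tsum_pos
    (fun _ => mul_nonneg (hμ _) (Nat.cast_nonneg _)) τ.2 ?_)
  exact mul_pos hτ_pos (Nat.cast_pos.2 (Multiset.count_pos.2 hs))

lemma exists_mem_of_nbrRoot_ne_zero {x : 𝒳} {s : 𝒳 × 𝒴 × 𝒴}
    (h : nbrRoot μ (edgeEquiv (x, s)) ≠ 0) : ∃ m, μ (x, m) ≠ 0 ∧ s ∈ m := by
  contrapose! h
  have hterm (m : Multiset (𝒳 × 𝒴 × 𝒴)) : μ (x, m) * (m.count s : ℝ) = 0 := by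
    by_cases hm : μ (x, m) = 0
    · rw [hm, zero_mul]
    · rw [Multiset.count_eq_zero_of_notMem (h m hm), Nat.cast_zero, mul_zero]
  simp only [nbrRoot_edgeEquiv, hterm, tsum_zero, mul_zero]

lemma nbrRoot_eq_zero_of_absolutelyContinuous (hη : ∀ τ, 0 ≤ η τ)
    (hηdeg : Summable fun τ => η τ * (deg τ : ℝ)) (hac : ∀ τ, η τ = 0 → μ τ = 0)
    (p : (𝒳 × 𝒴) × (𝒳 × 𝒴)) (hp : nbrRoot η p = 0) : nbrRoot μ p = 0 := by
  obtain ⟨⟨x, s⟩, rfl⟩ := edgeEquiv.surjective p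
  contrapose! hp
  obtain ⟨m, hm, hs⟩ := exists_mem_of_nbrRoot_ne_zero hp
  exact (nbrRoot_pos_of_mem hη hηdeg (τ := (x, m)) (mt (hac _) hm) hs).ne'

variable [Fintype 𝒳] [Fintype 𝒴]

lemma condNbr_eq_div (hμ : ∀ τ, 0 ≤ μ τ) (p : (𝒳 × 𝒴) × (𝒳 × 𝒴)) :
    condNbr μ p.1 p.2 = nbrRoot μ p / margO μ p.2 := by
  rw [condNbr]
  split_ifs with hpos
  · rfl
  · have hzero : margO μ p.2 = 0 :=
      le_antisymm (not_lt.1 hpos) (Finset.sum_nonneg fun _ _ => nbrRoot_nonneg hμ _)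
    rw [hzero, div_zero]

lemma margO_eq_marg1_of_symm (hsym : ∀ u v, nbrRoot μ (u, v) = nbrRoot μ (v, u)) :
    margO μ = marg1 μ :=
  funext fun v => Finset.sum_congr rfl fun u _ => hsym u v

lemma hasSum_mul_sum_map_edgeEquiv (hμ : ∀ τ, 0 ≤ μ τ)
    (hdeg : Summable fun τ => μ τ * (deg τ : ℝ)) (hβ : meanDeg μ ≠ 0)
    (F : (𝒳 × 𝒴) × (𝒳 × 𝒴) → ℝ) :
    HasSum (fun τ : T1 𝒳 𝒴 => μ τ * (τ.2.map fun s => F (edgeEquiv (τ.1, s))).sum)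
      (meanDeg μ * ∑ p, nbrRoot μ p * F p) := by
  have hsum_count (x : 𝒳) (m : Multiset (𝒳 × 𝒴 × 𝒴)) :
      (m.map fun s => F (edgeEquiv (x, s))).sum = ∑ s, m.count s * F (edgeEquiv (x, s)) := by
    simp only [Finset.sum_multiset_map_count, nsmul_eq_mul]
    refine Finset.sum_subset (Finset.subset_univ _) fun s _ hs => ?_
    rw [Multiset.count_eq_zero_of_notMem (mt Multiset.mem_toFinset.2 hs), Nat.cast_zero, zero_mul]
  have hroot (x : 𝒳) :
      HasSum (fun m => μ (x, m) * (m.map fun s => F (edgeEquiv (x, s))).sum)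
        (∑ s, meanDeg μ * (nbrRoot μ (edgeEquiv (x, s)) * F (edgeEquiv (x, s)))) := by
    simp only [hsum_count, Finset.mul_sum, ← mul_assoc, nbrRoot_edgeEquiv,
      mul_one_div_cancel hβ, one_mul]
    exact hasSum_sum fun s _ => (summable_mul_count hμ hdeg x s).hasSum.mul_right _
  rw [← edgeEquiv.sum_comp, Fintype.sum_prod_type, Finset.mul_sum]
  simp only [Finset.mul_sum]
  exact hasSum_prod_of_fintype hroot

end NeighborRoot

section EdgeTilt

variable {𝒳 𝒴 : Type}

/-- The reweighting of `η` by the product of the edge weights `r` over the edges at the root;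
`μ̌` and `μ̂` are the reweightings of `η₁` by ratios of marginals and of conditional laws. -/
def edgeTilt (η : T1 𝒳 𝒴 → ℝ) (r : (𝒳 × 𝒴) × (𝒳 × 𝒴) → ℝ) (τ : T1 𝒳 𝒴) : ℝ :=
  η τ * (τ.2.map fun s => r (edgeEquiv (τ.1, s))).prod

lemma log_edgeTilt_div {η : T1 𝒳 𝒴 → ℝ} {r : (𝒳 × 𝒴) × (𝒳 × 𝒴) → ℝ} {τ : T1 𝒳 𝒴}
    (hη : η τ ≠ 0) (hr : ∀ s ∈ τ.2, r (edgeEquiv (τ.1, s)) ≠ 0) :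
    Real.log (edgeTilt η r τ / η τ) =
      (τ.2.map fun s => Real.log (r (edgeEquiv (τ.1, s)))).sum := by
  rw [edgeTilt, mul_div_cancel_left₀ _ hη, Real.log_multiset_prod, Multiset.map_map]
  · rfl
  · simpa only [Multiset.forall_mem_map_iff] using hr

variable [Fintype 𝒳] [Fintype 𝒴] [DecidableEq 𝒳] [DecidableEq 𝒴] {μ η : T1 𝒳 𝒴 → ℝ}

lemma hasSum_mul_log_edgeTilt_div (hμ : ∀ τ, 0 ≤ μ τ)
    (hdeg : Summable fun τ => μ τ * (deg τ : ℝ)) (hβ : meanDeg μ ≠ 0)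
    (hac : ∀ τ, η τ = 0 → μ τ = 0) {r : (𝒳 × 𝒴) × (𝒳 × 𝒴) → ℝ}
    (hr : ∀ p, 0 < nbrRoot μ p → r p ≠ 0) :
    HasSum (fun τ => μ τ * Real.log (edgeTilt η r τ / η τ))
      (meanDeg μ * ∑ p, nbrRoot μ p * Real.log (r p)) := by
  refine (hasSum_mul_sum_map_edgeEquiv hμ hdeg hβ fun p => Real.log (r p)).congr_fun fun τ => ?_
  by_cases hτ : μ τ = 0
  · rw [hτ, zero_mul, zero_mul]
  · rw [log_edgeTilt_div (mt (hac τ) hτ) fun s hs => hr _ (nbrRoot_pos_of_mem hμ hdeg hτ hs)]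

lemma hasSum_mul_log_marg1_edgeTilt_div (hη : ∀ τ, 0 ≤ η τ)
    (hηdeg : Summable fun τ => η τ * (deg τ : ℝ)) (hμ : ∀ τ, 0 ≤ μ τ)
    (hdeg : Summable fun τ => μ τ * (deg τ : ℝ)) (hβ : meanDeg μ ≠ 0)
    (hac : ∀ τ, η τ = 0 → μ τ = 0) :
    HasSum (fun τ => μ τ * Real.log
        (edgeTilt η (fun p => marg1 μ p.1 / marg1 η p.1) τ / η τ))
      (meanDeg μ * finRelEnt (marg1 μ) (marg1 η)) := by
  have hμ' := nbrRoot_nonneg hμ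
  have hη' := nbrRoot_nonneg hη
  have hac' := nbrRoot_eq_zero_of_absolutelyContinuous hη hηdeg hac
  convert hasSum_mul_log_edgeTilt_div hμ hdeg hβ hac fun p hp => ?_ using 2
  · exact (sum_mul_fst (nbrRoot μ) fun u => Real.log (marg1 μ u / marg1 η u)).symm
  · have hηp : 0 < nbrRoot η p := (hη' p).lt_of_ne' fun h => hp.ne' (hac' p h)
    exact (div_pos (fst_marginal_pos hμ' hp) (fst_marginal_pos hη' hηp)).ne'

lemma hasSum_mul_log_condNbr_edgeTilt_div (hη : ∀ τ, 0 ≤ η τ)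
    (hηdeg : Summable fun τ => η τ * (deg τ : ℝ)) (hμ : ∀ τ, 0 ≤ μ τ)
    (hdeg : Summable fun τ => μ τ * (deg τ : ℝ)) (hβ : meanDeg μ ≠ 0)
    (hac : ∀ τ, η τ = 0 → μ τ = 0) :
    HasSum (fun τ => μ τ * Real.log
        (edgeTilt η (fun p => condNbr μ p.1 p.2 / condNbr η p.1 p.2) τ / η τ))
      (meanDeg μ *
        (finRelEnt (nbrRoot μ) (nbrRoot η) - finRelEnt (margO μ) (margO η))) := by
  have hμ' := nbrRoot_nonneg hμ
  have hη' := nbrRoot_nonneg hη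
  have hac' := nbrRoot_eq_zero_of_absolutelyContinuous hη hηdeg hac
  simp only [condNbr_eq_div hμ, condNbr_eq_div hη]
  convert hasSum_mul_log_edgeTilt_div hμ hdeg hβ hac fun p hp => ?_ using 2
  · exact (sum_mul_log_conditional_div hμ' hη' hac').symm
  · have hηp : 0 < nbrRoot η p := (hη' p).lt_of_ne' fun h => hp.ne' (hac' p h)
    exact (div_pos (div_pos hp (snd_marginal_pos hμ' hp))
      (div_pos hηp (snd_marginal_pos hη' hηp))).ne'

theorem relEnt_decomposition_check_hat_general (hη : ∀ τ, 0 ≤ η τ)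
    (hηdeg : Summable fun τ => η τ * (deg τ : ℝ)) (hηmarg : margO η = marg1 η)
    (hμ : ∀ τ, 0 ≤ μ τ) (hdeg : Summable fun τ => μ τ * (deg τ : ℝ)) (hβ : 0 < meanDeg μ)
    (hac : ∀ τ, η τ = 0 → μ τ = 0) (hμmarg : margO μ = marg1 μ) :
    let check := edgeTilt η fun p => marg1 μ p.1 / marg1 η p.1
    let hat := edgeTilt η fun p => condNbr μ p.1 p.2 / condNbr η p.1 p.2
    (Summable fun τ => |μ τ * Real.log (check τ / η τ)|) ∧
      (Summable fun τ => |μ τ * Real.log (hat τ / η τ)|) ∧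
      meanDeg μ * finRelEnt (nbrRoot μ) (nbrRoot η) =
        (∑' τ, μ τ * Real.log (check τ / η τ)) + ∑' τ, μ τ * Real.log (hat τ / η τ) := by
  intro check hat
  have hcheck := hasSum_mul_log_marg1_edgeTilt_div hη hηdeg hμ hdeg hβ.ne' hac
  have hhat := hasSum_mul_log_condNbr_edgeTilt_div hη hηdeg hμ hdeg hβ.ne' hac
  refine ⟨hcheck.summable.abs, hhat.summable.abs, ?_⟩
  rw [hcheck.tsum_eq, hhat.tsum_eq, hμmarg, hηmarg, ← mul_add, add_sub_cancel]

end EdgeTilt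

section ReferenceLaw

variable {𝒳 𝒴 : Type}

lemma xiBar_comm (ξ : 𝒴 × 𝒴 → ℝ) (y y' : 𝒴) : xiBar ξ y y' = xiBar ξ y' y := by
  rw [xiBar, xiBar, add_comm]

lemma sum_xiBar [Fintype 𝒴] (ξ : 𝒴 × 𝒴 → ℝ) :
    ∑ p : 𝒴 × 𝒴, xiBar ξ p.1 p.2 = ∑ p, ξ p := by
  have hswap : ∑ p : 𝒴 × 𝒴, ξ (p.2, p.1) = ∑ p, ξ p := (Equiv.prodComm 𝒴 𝒴).sum_comp ξ
  simp only [xiBar, ← Finset.sum_div, Finset.sum_add_distrib, Prod.mk.eta]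
  rw [hswap, add_self_div_two]

/-- The weight of the triple of marks describing one neighbor of the root under `η₁`. -/
def markWeight (ν : 𝒳 → ℝ) (ξ : 𝒴 × 𝒴 → ℝ) (s : 𝒳 × 𝒴 × 𝒴) : ℝ :=
  ν s.1 * xiBar ξ s.2.1 s.2.2

lemma markWeight_nonneg {ν : 𝒳 → ℝ} (hν : ∀ x, 0 ≤ ν x) {ξ : 𝒴 × 𝒴 → ℝ} (hξ : ∀ p, 0 ≤ ξ p)
    (s : 𝒳 × 𝒴 × 𝒴) : 0 ≤ markWeight ν ξ s :=
  mul_nonneg (hν _) (div_nonneg (add_nonneg (hξ _) (hξ _)) zero_le_two)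

lemma sum_markWeight [Fintype 𝒳] [Fintype 𝒴] (ν : 𝒳 → ℝ) (ξ : 𝒴 × 𝒴 → ℝ) :
    ∑ s, markWeight ν ξ s = (∑ x, ν x) * ∑ p, ξ p := by
  rw [← sum_xiBar, Finset.sum_mul_sum, Fintype.sum_prod_type]
  rfl

variable [DecidableEq 𝒳] [DecidableEq 𝒴]

lemma ordCoeff_eq_countPerms (m : Multiset (𝒳 × 𝒴 × 𝒴)) : ordCoeff m = m.countPerms := by
  have hspec : (∏ s ∈ m.toFinset, (m.count s).factorial) * m.countPerms = m.card.factorial := by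
    rw [← m.toFinset_sum_count_eq]
    exact Nat.multinomial_spec m.toFinset fun s => m.count s
  have hne : ∏ s ∈ m.toFinset, ((m.count s).factorial : ℝ) ≠ 0 :=
    Finset.prod_ne_zero_iff.2 fun s _ => Nat.cast_ne_zero.2 (Nat.factorial_ne_zero _)
  rw [ordCoeff, div_eq_iff hne, mul_comm]
  exact_mod_cast hspec.symm

lemma eta1_eq_mul_multisetWeight (ν : 𝒳 → ℝ) (ξ : 𝒴 × 𝒴 → ℝ) (Q : ℕ → ℝ) (τ : T1 𝒳 𝒴) :
    eta1 ν ξ Q τ = ν τ.1 * (Q τ.2.card * multisetWeight (markWeight ν ξ) τ.2) := by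
  rw [eta1, ordCoeff_eq_countPerms, mul_assoc, mul_assoc]
  rfl

lemma eta1_nonneg {ν : 𝒳 → ℝ} (hν : ∀ x, 0 ≤ ν x) {ξ : 𝒴 × 𝒴 → ℝ} (hξ : ∀ p, 0 ≤ ξ p)
    {Q : ℕ → ℝ} (hQ : ∀ k, 0 ≤ Q k) (τ : T1 𝒳 𝒴) : 0 ≤ eta1 ν ξ Q τ := by
  rw [eta1_eq_mul_multisetWeight]
  exact mul_nonneg (hν _)
    (mul_nonneg (hQ _) (multisetWeight_nonneg (markWeight_nonneg hν hξ) _))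

lemma nbrRoot_eta1_symm (ν : 𝒳 → ℝ) (ξ : 𝒴 × 𝒴 → ℝ) (Q : ℕ → ℝ) (u v : 𝒳 × 𝒴) :
    nbrRoot (eta1 ν ξ Q) (u, v) = nbrRoot (eta1 ν ξ Q) (v, u) := by
  simp only [nbrRoot, eta1_eq_mul_multisetWeight, mul_assoc (ν _), tsum_mul_left,
    tsum_multisetWeight_mul_count, markWeight]
  rw [xiBar_comm ξ u.2 v.2]
  ring

lemma summable_eta1_mul_deg [Fintype 𝒳] [Fintype 𝒴] {ν : 𝒳 → ℝ} (hν : ∀ x, 0 ≤ ν x)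
    {ξ : 𝒴 × 𝒴 → ℝ} (hξ : ∀ p, 0 ≤ ξ p) {Q : ℕ → ℝ} (hQ : ∀ k, 0 ≤ Q k)
    (hsum : Summable fun k : ℕ => k * Q k * ((∑ x, ν x) * ∑ p, ξ p) ^ k) :
    Summable fun τ : T1 𝒳 𝒴 => eta1 ν ξ Q τ * (deg τ : ℝ) := by
  rw [← sum_markWeight] at hsum
  have hmarks := summable_mul_multisetWeight (markWeight_nonneg hν hξ)
    (fun k => mul_nonneg k.cast_nonneg (hQ k)) hsum
  refine (hasSum_prod_of_fintype fun x =>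
    (hmarks.hasSum.mul_left (ν x)).congr_fun fun m => ?_).summable
  rw [eta1_eq_mul_multisetWeight, deg]
  ring

end ReferenceLaw

/-- **Decomposition of `β·H(μ̄^{1,o} ‖ η̄₁^{1,o})` (Proposition 5.4).**
If `μ` is a pmf on `T1` with mean degree `β ∈ (0, ∞)`, `η₁` is the law with degree
distribution `Q` and i.i.d. marks, `μ ≪ η₁`, and `μ̄^{1,o}` is symmetric, then the
series `∑_τ μ τ · log (μ̌ τ / η₁ τ)` and `∑_τ μ τ · log (μ̂ τ / η₁ τ)` converge
absolutely and
`β·H(μ̄^{1,o} ‖ η̄₁^{1,o}) = ∑_τ μ τ · log (μ̌ τ / η₁ τ) + ∑_τ μ τ · log (μ̂ τ / η₁ τ)`. -/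
theorem relEnt_decomposition_check_hat
    {𝒳 𝒴 : Type} [Fintype 𝒳] [Fintype 𝒴] [DecidableEq 𝒳] [DecidableEq 𝒴]
    (ν : 𝒳 → ℝ) (hν0 : ∀ x, 0 ≤ ν x) (hν1 : ∑ x, ν x = 1)
    (ξ : 𝒴 × 𝒴 → ℝ) (hξ0 : ∀ p, 0 ≤ ξ p) (hξ1 : ∑ p : 𝒴 × 𝒴, ξ p = 1)
    (Q : ℕ → ℝ) (hQ0 : ∀ k, 0 ≤ Q k) (hQ1 : HasSum Q 1)
    (hQm : Summable fun k : ℕ => (k : ℝ) * Q k)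
    (hQpos : 0 < ∑' k : ℕ, (k : ℝ) * Q k)
    (μ : T1 𝒳 𝒴 → ℝ) (hμ0 : ∀ τ, 0 ≤ μ τ) (hμ1 : HasSum μ 1)
    (hβfin : Summable fun τ : T1 𝒳 𝒴 => μ τ * (deg τ : ℝ))
    (hβpos : 0 < meanDeg μ)
    (habs : ∀ τ, eta1 ν ξ Q τ = 0 → μ τ = 0)
    (hsym : ∀ u v : 𝒳 × 𝒴, nbrRoot μ (u, v) = nbrRoot μ (v, u)) :
    (Summable fun τ : T1 𝒳 𝒴 => |μ τ * Real.log (muCheck ν ξ Q μ τ / eta1 ν ξ Q τ)|) ∧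
      (Summable fun τ : T1 𝒳 𝒴 => |μ τ * Real.log (muHat ν ξ Q μ τ / eta1 ν ξ Q τ)|) ∧
      meanDeg μ *
          (∑ p : (𝒳 × 𝒴) × (𝒳 × 𝒴),
            nbrRoot μ p * Real.log (nbrRoot μ p / nbrRoot (eta1 ν ξ Q) p)) =
        (∑' τ : T1 𝒳 𝒴, μ τ * Real.log (muCheck ν ξ Q μ τ / eta1 ν ξ Q τ)) +
          ∑' τ : T1 𝒳 𝒴, μ τ * Real.log (muHat ν ξ Q μ τ / eta1 ν ξ Q τ) := by
  exact relEnt_decomposition_check_hat_general (eta1_nonneg hν0 hξ0 hQ0)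
    (summable_eta1_mul_deg hν0 hξ0 hQ0 (by simpa only [hν1, hξ1, one_mul, one_pow, mul_one]))
    (margO_eq_marg1_of_symm (nbrRoot_eta1_symm ν ξ Q)) hμ0 hβfin hβpos habs
    (margO_eq_marg1_of_symm hsym)
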